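/- Let X be a finite set, let r ≥ 1 and n ≥ 1 be integers, and for each i ∈ Fin r let P i be a family of n subsets of X ('blocks') that are pairwise disjoint and whose union is X (i.e., each P i is a partition of X into exactly n blocks, a parallel class). Suppose that for every choice function f with f i ∈ P i for all i ∈ Fin r, the intersection ⋂_{i ∈ Fin r} f i has exactly one element (μ_r = 1). Then |X| = n^r. -/

import Mathlib

/-!
Sending a point to the blocks through it, one from each parallel class, is a map from points to
choices of blocks. Its fibre over a choice is the intersection of the chosen blocks, so `μ_r = 1`
says exactly that this map is a bijection.
-/

universe u v w

/-- A parallel class of blocks: every point lies in exactly one block. Blocks are elements of any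
type with a membership relation, so that both `Set X` and `Finset X` are covered; empty blocks are
not excluded. -/
def IsParallelClass {X : Type v} {β : Type w} [Membership X β] (S : Set β) : Prop :=
  ∀ x : X, ∃! B, B ∈ S ∧ x ∈ B

/-- The condition `μ_r = 1` on a family of block systems: blocks chosen one from each system meet
in exactly one point. -/
def HasUnitCrossIntersection {ι : Type u} {X : Type v} {β : Type w} [Membership X β]
    (P : ι → Set β) : Prop :=
  ∀ f : ι → β, (∀ i, f i ∈ P i) → ∃! x : X, ∀ i, x ∈ f i

theorem isParallelClass_of_pairwiseDisjoint {X : Type v} {S : Set (Finset X)}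
    (hdisj : S.PairwiseDisjoint id) (hcover : ∀ x, ∃ B ∈ S, x ∈ B) : IsParallelClass S := by
  intro x
  obtain ⟨B, hB, hxB⟩ := hcover x
  exact ⟨B, ⟨hB, hxB⟩, fun C ⟨hC, hxC⟩ => hdisj.elim_finset hC hB x hxC hxB⟩

namespace IsParallelClass

variable {ι : Type u} {X : Type v} {β : Type w} [Membership X β]

/-- The block of a parallel class through a given point. -/
noncomputable def block {S : Set β} (hS : IsParallelClass S) (x : X) : S :=
  ⟨(hS x).choose, (hS x).choose_spec.1.1⟩

theorem block_eq_iff {S : Set β} (hS : IsParallelClass S) {x : X} {B : S} :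
    hS.block x = B ↔ x ∈ B.1 := by
  constructor
  · rintro rfl
    exact (hS x).choose_spec.1.2
  · intro hx
    exact Subtype.ext ((hS x).choose_spec.2 B ⟨B.2, hx⟩).symm

theorem bijective_block {P : ι → Set β} (hP : ∀ i, IsParallelClass (P i))
    (hμ : HasUnitCrossIntersection P) :
    Function.Bijective fun (x : X) (i : ι) => (hP i).block x := by
  rw [Function.bijective_iff_existsUnique]
  intro f
  simp only [funext_iff, block_eq_iff]
  exact hμ (fun i => f i) fun i => (f i).2

end IsParallelClass

theorem maximal_crd_point_count_general {ι : Type u} {X : Type v} {β : Type w} [Membership X β]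
    {P : ι → Set β} (hP : ∀ i, IsParallelClass (P i)) (hμ : HasUnitCrossIntersection P) :
    Cardinal.lift.{max u w} (Cardinal.mk X) =
      Cardinal.lift.{v} (Cardinal.prod fun i => Cardinal.mk (P i)) := by
  rw [← Cardinal.mk_pi]
  exact Cardinal.lift_mk_eq'.2 ⟨Equiv.ofBijective _ (IsParallelClass.bijective_block hP hμ)⟩

/-- Lemma 3: a maximal cross resolvable design with `μ_r = 1` satisfies
`v = b_r ^ r`.  If `X` carries `r ≥ 1` parallel classes, each consisting of
`n ≥ 1` pairwise disjoint blocks covering `X`, and any choice of one block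
from each parallel class intersects in exactly one point, then `|X| = n^r`. -/
theorem maximal_crd_point_count (X : Type*) [Fintype X] [DecidableEq X]
    (r n : ℕ) (hr : 1 ≤ r) (hn : 1 ≤ n)
    (P : Fin r → Finset (Finset X))
    (hcard : ∀ i, (P i).card = n)
    (hdisj : ∀ i, ∀ B₁ ∈ P i, ∀ B₂ ∈ P i, B₁ ≠ B₂ → Disjoint B₁ B₂)
    (hcover : ∀ i, ∀ x : X, ∃ B ∈ P i, x ∈ B)
    (hmu : ∀ f : Fin r → Finset X, (∀ i, f i ∈ P i) →
      ∃! x : X, ∀ i, x ∈ f i) :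
    Fintype.card X = n ^ r := by
  have hX : (Fintype.card X : Cardinal) = (n : Cardinal) ^ r := by
    simpa [hcard] using maximal_crd_point_count_general (P := fun i => (P i : Set (Finset X)))
      (fun i => isParallelClass_of_pairwiseDisjoint (hdisj i) (hcover i)) hmu
  exact_mod_cast hX
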